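/- For every closed term M of Λ⊕, the judgment M ⇓v ⟦M⟧v holds: the call-by-value small-step semantics of M is itself derivable in the coinductive call-by-value big-step semantics. -/

import Mathlib

open scoped ENNReal

/-- Terms of Λ⊕ (and of Λ⊕⁺), in de Bruijn notation: variables, abstractions,
applications and binary (probabilistic) sums.  De Bruijn indices realize
"terms up to renaming of bound variables". -/
inductive Term : Type
  | var : ℕ → Term
  | lam : Term → Term
  | app : Term → Term → Term
  | choice : Term → Term → Term
  deriving DecidableEq

namespace Term

/-- Values: variables and abstractions. -/
inductive IsValue : Term → Prop
  | var (n : ℕ) : IsValue (var n)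
  | lam (M : Term) : IsValue (lam M)

/-- Boolean value test. -/
def isVal : Term → Bool
  | var _ => true
  | lam _ => true
  | _ => false

/-- Shifting of de Bruijn indices: add `d` to all indices `≥ c`. -/
def shift (d c : ℕ) : Term → Term
  | var n => if n < c then var n else var (n + d)
  | lam M => lam (shift d (c + 1) M)
  | app M N => app (shift d c M) (shift d c N)
  | choice M N => choice (shift d c M) (shift d c N)

/-- Capture-avoiding substitution `M[j := N]` (the variable `j` is consumed and
higher indices are decremented, as in a β-step). -/
def subst : Term → ℕ → Term → Term
  | var n, j, N => if n = j then shift j 0 N else if j < n then var (n - 1) else var n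
  | lam M, j, N => lam (subst M (j + 1) N)
  | app M L, j, N => app (subst M j N) (subst L j N)
  | choice M L, j, N => choice (subst M j N) (subst L j N)

/-- All free indices are `< n`. -/
def closedUnder : Term → ℕ → Prop
  | var m, n => m < n
  | lam M, n => closedUnder M (n + 1)
  | app M N, n => closedUnder M n ∧ closedUnder N n
  | choice M N, n => closedUnder M n ∧ closedUnder N n

/-- Closed terms: no free variables. -/
def Closed (M : Term) : Prop := closedUnder M 0

end Term

/-- (Sub)distributions are represented as functions from terms into `ℝ≥0∞`;
genuine distributions (`IsDist`) are supported on values and have mass `≤ 1`. -/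
abbrev PDist := Term → ℝ≥0∞

/-- The sum (total mass) `Σ𝒟` of a distribution. -/
noncomputable def dsum (D : PDist) : ℝ≥0∞ := ∑' M, D M

/-- The support of a distribution. -/
def dsupp (D : PDist) : Set Term := {M | D M ≠ 0}

/-- The everywhere-zero distribution `∅`. -/
noncomputable def dzero : PDist := fun _ => 0

/-- The Dirac distribution `{V^1}`. -/
noncomputable def dirac (V : Term) : PDist := fun M => if M = V then 1 else 0

/-- Being a genuine (sub)probability distribution: supported on values, with
total mass at most one. -/
def IsDist (D : PDist) : Prop := (∀ M, D M ≠ 0 → M.IsValue) ∧ dsum D ≤ 1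

/-- Call-by-value reduction `↦v`, relating a term to the (equiprobable) finite
sequence of its possible reducts. -/
inductive RedV : Term → List Term → Prop
  | beta {M V : Term} : V.IsValue → RedV (.app (.lam M) V) [M.subst 0 V]
  | choice {V W : Term} : V.IsValue → W.IsValue → RedV (.choice V W) [V, W]
  | appL {M N : Term} {Ls : List Term} :
      RedV M Ls → RedV (.app M N) (Ls.map (fun L => .app L N))
  | appR {V M : Term} {Ns : List Term} :
      V.IsValue → RedV M Ns → RedV (.app V M) (Ns.map (fun L => .app V L))
  | choiceL {M N : Term} {Ls : List Term} :
      RedV M Ls → RedV (.choice M N) (Ls.map (fun L => .choice L N))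
  | choiceR {V M : Term} {Ns : List Term} :
      V.IsValue → RedV M Ns → RedV (.choice V M) (Ns.map (fun L => .choice V L))

/-- Call-by-name reduction `↦n`. -/
inductive RedN : Term → List Term → Prop
  | beta {M N : Term} : RedN (.app (.lam M) N) [M.subst 0 N]
  | choice {M N : Term} : RedN (.choice M N) [M, N]
  | appL {M N : Term} {Ls : List Term} :
      RedN M Ls → RedN (.app M N) (Ls.map (fun L => .app L N))

/-- The inductive small-step convergence relation `⇒`, parametric in the
underlying reduction relation: any term evaluates to `∅`; a value `V`
evaluates to `{V^1}`; and if `M ↦ N₁,…,Nₙ` and `Nᵢ ⇒ 𝒟ᵢ` then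
`M ⇒ Σᵢ (1/n)𝒟ᵢ`. -/
inductive Conv (Red : Term → List Term → Prop) : Term → PDist → Prop
  | bot (M : Term) : Conv Red M dzero
  | val {V : Term} : V.IsValue → Conv Red V (dirac V)
  | step {M : Term} {Ns : List Term} (Ds : Fin Ns.length → PDist) :
      Red M Ns → (∀ i, Conv Red (Ns.get i) (Ds i)) →
      Conv Red M (fun W => (∑ i, Ds i W) / (Ns.length : ℝ≥0∞))

/-- Call-by-value small-step convergence `⇒v`. -/
def SmallV : Term → PDist → Prop := Conv RedV

/-- Call-by-name small-step convergence `⇒n`. -/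
def SmallN : Term → PDist → Prop := Conv RedN

/-- The small-step semantics `⟦M⟧`: the pointwise supremum of all distributions
derivable for `M`. -/
noncomputable def semOf (S : Term → PDist → Prop) (M : Term) : PDist :=
  fun W => ⨆ (D : PDist) (_ : S M D), D W

/-- Call-by-value small-step semantics `⟦M⟧v`. -/
noncomputable def semV : Term → PDist := semOf SmallV

/-- Call-by-name small-step semantics `⟦M⟧n`. -/
noncomputable def semN : Term → PDist := semOf SmallN

/-- One-step unfolding of the divergence inference system: a value diverges
with probability `0`; if `M ↦ N₁,…,Nₙ` and `Nᵢ` diverges with probability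
`pᵢ`, then `M` diverges with probability `Σᵢ (1/n)pᵢ`. -/
def DivStep (Red : Term → List Term → Prop) (R : Term → ℝ≥0∞ → Prop)
    (M : Term) (p : ℝ≥0∞) : Prop :=
  (M.IsValue ∧ p = 0) ∨
    ∃ (Ns : List Term) (ps : Fin Ns.length → ℝ≥0∞),
      Red M Ns ∧ (∀ i, R (Ns.get i) (ps i)) ∧ p = (∑ i, ps i) / (Ns.length : ℝ≥0∞)

/-- The coinductively-defined divergence relation `⇓div`: the union of all
consistent relations between terms and probabilities in `[0,1]`. -/
def Diverges (Red : Term → List Term → Prop) (M : Term) (p : ℝ≥0∞) : Prop :=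
  ∃ R : Term → ℝ≥0∞ → Prop,
    (∀ N q, R N q → q ≤ 1 ∧ DivStep Red R N q) ∧ R M p

/-- Call-by-value divergence `⇓div`. -/
def DivV : Term → ℝ≥0∞ → Prop := Diverges RedV

/-- Call-by-name divergence `⇓div,n`. -/
def DivN : Term → ℝ≥0∞ → Prop := Diverges RedN

/-- One-step unfolding of the call-by-value big-step inference system. -/
def BigVStep (R : Term → PDist → Prop) (M : Term) (D : PDist) : Prop :=
  (M.IsValue ∧ D = dirac M) ∨
  (∃ (N L : Term) (E F : PDist) (G : Term → Term → PDist),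
      M = .app N L ∧ R N E ∧ R L F ∧
      (∀ P V, E (.lam P) ≠ 0 → V.IsValue → F V ≠ 0 → R (P.subst 0 V) (G P V)) ∧
      D = fun W => ∑' (P : Term), ∑' (V : Term), E (.lam P) * F V * G P V W) ∨
  (∃ (N L : Term) (E F : PDist),
      M = .choice N L ∧ R N E ∧ R L F ∧
      D = fun W => (E W * dsum F + F W * dsum E) / 2)

/-- The coinductive call-by-value big-step relation `⇓v`: the union of all
consistent relations between terms and distributions. -/
def BigV (M : Term) (D : PDist) : Prop :=
  ∃ R : Term → PDist → Prop,
    (∀ N E, R N E → IsDist E ∧ BigVStep R N E) ∧ R M D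

/-- One-step unfolding of the call-by-name big-step inference system. -/
def BigNStep (R : Term → PDist → Prop) (M : Term) (D : PDist) : Prop :=
  (M.IsValue ∧ D = dirac M) ∨
  (∃ (N L : Term) (E : PDist) (F : Term → PDist),
      M = .app N L ∧ R N E ∧
      (∀ P, E (.lam P) ≠ 0 → R (P.subst 0 L) (F P)) ∧
      D = fun W => ∑' (P : Term), E (.lam P) * F P W) ∨
  (∃ (N L : Term) (E F : PDist),
      M = .choice N L ∧ R N E ∧ R L F ∧ D = fun W => (E W + F W) / 2)

/-- The coinductive call-by-name big-step relation `⇓n`. -/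
def BigN (M : Term) (D : PDist) : Prop :=
  ∃ R : Term → PDist → Prop,
    (∀ N E, R N E → IsDist E ∧ BigNStep R N E) ∧ R M D

/-- Big-step semantics `⟪M⟫`: the pointwise infimum of all distributions
derivable for `M` in a big-step system. -/
noncomputable def bigSemOf (B : Term → PDist → Prop) (M : Term) : PDist :=
  fun W => ⨅ (D : PDist) (_ : B M D), D W

/-!
Coinduction with the graph of `semV` reduces the claim to three equations: `⟦V⟧ = {V^1}` for a
value `V`, and the big-step rules for applications and sums with `⟦·⟧` in every premise. The last
two come from one fact: evaluating `C[N]`, for an evaluation context `C`, amounts to evaluating `N`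
to a value `X` and then `C[X]`, that is `⟦C[N]⟧ = ∑ X, ⟦N⟧(X) · ⟦C[X]⟧`. Both inequalities are
inductions on `⇒v`; the exchange of supremum and sum is possible because reduction is
deterministic, so that the distributions a term converges to form a directed set.
-/

section Sums

variable {α ι : Type*}

theorem tsum_iSup_of_directed {f : ι → α → ℝ≥0∞} (hf : Directed (· ≤ ·) f) :
    ∑' a, ⨆ i, f i a = ⨆ i, ∑' a, f i a := by
  simp only [ENNReal.tsum_eq_iSup_sum]
  rw [iSup_comm]
  refine iSup_congr fun s => ENNReal.finsetSum_iSup fun i j => ?_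
  obtain ⟨k, hik, hjk⟩ := hf i j
  exact ⟨k, fun a => ⟨hik a, hjk a⟩⟩

theorem sum_iSup_eq_iSup_pi [Fintype α] {κ : α → Type*} [∀ a, Nonempty (κ a)]
    (f : ∀ a, κ a → ℝ≥0∞) : ∑ a, ⨆ k, f a k = ⨆ k : ∀ a, κ a, ∑ a, f a (k a) := by
  have iSup_eval (a : α) : ⨆ k, f a k = ⨆ k : ∀ a, κ a, f a (k a) :=
    ((Function.surjective_eval a).iSup_comp (f a)).symm
  simp only [iSup_eval]
  refine ENNReal.finsetSum_iSup fun k l => ?_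
  have exists_larger (a : α) : ∃ m, f a (k a) ≤ f a m ∧ f a (l a) ≤ f a m :=
    (le_total (f a (k a)) (f a (l a))).elim (fun h => ⟨l a, h, le_rfl⟩) fun h => ⟨k a, le_rfl, h⟩
  choose m hm using exists_larger
  exact ⟨m, hm⟩

theorem tsum_sum_div_mul (s : Finset ι) (c : ℝ≥0∞) (f : ι → α → ℝ≥0∞) (g : α → ℝ≥0∞) :
    ∑' a, (∑ i ∈ s, f i a) / c * g a = (∑ i ∈ s, ∑' a, f i a * g a) / c := by
  rw [← Summable.tsum_finsetSum fun _ _ => ENNReal.summable, div_eq_mul_inv,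
    ← ENNReal.tsum_mul_right]
  simp only [div_eq_mul_inv, ← Finset.sum_mul, mul_right_comm]

theorem sum_length_map_div {β : Type*} (l : List α) (C : α → β)
    (f : Fin (l.map C).length → ℝ≥0∞) :
    (∑ i, f i) / ((l.map C).length : ℝ≥0∞) =
      (∑ i, f (Fin.cast (List.length_map C).symm i)) / (l.length : ℝ≥0∞) := by
  rw [← Fin.sum_congr' f (List.length_map C).symm]
  simp only [List.length_map]

theorem tsum_dirac_mul (V : Term) (f : Term → ℝ≥0∞) : ∑' X, dirac V X * f X = f V := by
  simp [dirac]

theorem tsum_tsum_mul_half_dirac (E F : PDist) (W : Term) :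
    ∑' X, ∑' Y, E X * F Y * ((dirac X W + dirac Y W) / 2) =
      (E W * dsum F + F W * dsum E) / 2 := by
  have tsum_mul_dirac (D : PDist) : ∑' X, D X * dirac X W = D W := by
    simp [dirac]
  calc ∑' X, ∑' Y, E X * F Y * ((dirac X W + dirac Y W) / 2)
      = ∑' X, ∑' Y, (E X * dirac X W * F Y + E X * (F Y * dirac Y W)) * 2⁻¹ := by
        refine tsum_congr fun X => tsum_congr fun Y => ?_
        rw [div_eq_mul_inv]
        ring
    _ = (E W * dsum F + F W * dsum E) / 2 := by
        simp only [ENNReal.tsum_mul_right, ENNReal.tsum_add, ENNReal.tsum_mul_left,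
          tsum_mul_dirac, mul_comm (F W), dsum, div_eq_mul_inv]

end Sums

section SmallStep

variable {Red : Term → List Term → Prop} {M V W : Term} {Ns : List Term} {D D' : PDist}

theorem le_semOf {S : Term → PDist → Prop} (h : S M D) (W : Term) : D W ≤ semOf S M W :=
  le_iSup₂ (f := fun (D : PDist) (_ : S M D) => D W) D h

theorem semOf_eq_iSup_subtype (S : Term → PDist → Prop) (M W : Term) :
    semOf S M W = ⨆ D : {D // S M D}, D.1 W :=
  iSup_subtype'

theorem Conv.isDist (h : Conv Red M D) : IsDist D := by
  induction h with
  | bot => exact ⟨fun W hW => absurd rfl hW, by simp [dsum, dzero]⟩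
  | @val V hV =>
    refine ⟨fun W hW => ?_, by simp [dsum, dirac]⟩
    have : W = V := by simpa [dirac] using hW
    rwa [this]
  | @step _ Ns Ds _ _ ih =>
    refine ⟨fun W hW => ?_, ?_⟩
    · have sum_ne_zero : ∑ i, Ds i W ≠ 0 := fun h => hW (by simp only [h, ENNReal.zero_div])
      obtain ⟨i, -, hi⟩ := Finset.exists_ne_zero_of_sum_ne_zero sum_ne_zero
      exact (ih i).1 W hi
    · calc dsum (fun W => (∑ i, Ds i W) / (Ns.length : ℝ≥0∞))
          = (∑ i, dsum (Ds i)) / (Ns.length : ℝ≥0∞) := by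
            simpa only [dsum, mul_one] using tsum_sum_div_mul Finset.univ _ Ds fun _ => 1
        _ ≤ 1 := by
            refine ENNReal.div_le_of_le_mul ?_
            simpa using Finset.sum_le_sum fun i (_ : i ∈ Finset.univ) => (ih i).2

theorem sum_semOf_conv_div_le (h : Red M Ns) (W : Term) :
    (∑ i, semOf (Conv Red) (Ns.get i) W) / (Ns.length : ℝ≥0∞) ≤ semOf (Conv Red) M W := by
  have (N : Term) : Nonempty {D // Conv Red N D} := ⟨⟨dzero, .bot N⟩⟩
  simp only [semOf_eq_iSup_subtype, sum_iSup_eq_iSup_pi, ENNReal.iSup_div]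
  rw [← semOf_eq_iSup_subtype]
  exact iSup_le fun Ds => le_semOf (Conv.step (fun i => (Ds i).1) h fun i => (Ds i).2) W

theorem sum_tsum_semOf_conv_mul_div_le (h : Red M Ns) (g : Term → ℝ≥0∞) :
    (∑ i, ∑' X, semOf (Conv Red) (Ns.get i) X * g X) / (Ns.length : ℝ≥0∞) ≤
      ∑' X, semOf (Conv Red) M X * g X := by
  rw [← tsum_sum_div_mul]
  gcongr with X
  exact sum_semOf_conv_div_le h X

theorem le_tsum_semOf_conv_mul_of_isValue (hV : V.IsValue) (g : Term → ℝ≥0∞) :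
    g V ≤ ∑' X, semOf (Conv Red) V X * g X :=
  calc g V = ∑' X, dirac V X * g X := (tsum_dirac_mul V g).symm
    _ ≤ ∑' X, semOf (Conv Red) V X * g X := by
      gcongr with X
      exact le_semOf (.val hV) X

theorem semOf_conv_of_stuck (hM : ¬ M.IsValue) (h : ∀ Ns, ¬ Red M Ns) (W : Term) :
    semOf (Conv Red) M W = 0 := by
  refine le_antisymm (iSup₂_le fun D hD => ?_) bot_le
  cases hD with
  | bot => exact le_rfl
  | val hV => exact absurd hV hM
  | step _ hred _ => exact absurd hred (h _)

theorem semOf_conv_eq_zero_of_not_isValue (M : Term) (hW : ¬ W.IsValue) :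
    semOf (Conv Red) M W = 0 := by
  refine le_antisymm (iSup₂_le fun D hD => ?_) bot_le
  exact (not_not.1 (mt (hD.isDist.1 W) hW)).le

theorem tsum_semOf_conv_mul_congr (M : Term) {f g : Term → ℝ≥0∞}
    (h : ∀ V, V.IsValue → f V = g V) :
    ∑' V, semOf (Conv Red) M V * f V = ∑' V, semOf (Conv Red) M V * g V := by
  refine tsum_congr fun V => ?_
  by_cases hV : V.IsValue
  · rw [h V hV]
  · simp only [semOf_conv_eq_zero_of_not_isValue M hV, zero_mul]

section Deterministic

variable (hval : ∀ {V Ns}, Term.IsValue V → ¬ Red V Ns)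

include hval

theorem semOf_conv_of_isValue (hV : V.IsValue) : semOf (Conv Red) V = dirac V := by
  funext W
  refine le_antisymm (iSup₂_le fun D hD => ?_) (le_semOf (.val hV) W)
  cases hD with
  | bot => exact bot_le
  | val _ => exact le_rfl
  | step _ hred _ => exact absurd hred (hval hV)

variable (hdet : Relator.RightUnique Red)

include hdet

theorem semOf_conv_of_red (h : Red M Ns) (W : Term) :
    semOf (Conv Red) M W = (∑ i, semOf (Conv Red) (Ns.get i) W) / (Ns.length : ℝ≥0∞) := by
  refine le_antisymm (iSup₂_le fun D hD => ?_) (sum_semOf_conv_div_le h W)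
  cases hD with
  | bot => exact bot_le
  | val hV => exact absurd h (hval hV)
  | step Ds hred hDs =>
    obtain rfl := hdet h hred
    exact ENNReal.div_le_div_right (Finset.sum_le_sum fun i _ => le_semOf (hDs i) W) _

theorem Conv.exists_ge_ge (h : Conv Red M D) (h' : Conv Red M D') :
    ∃ D'', Conv Red M D'' ∧ D ≤ D'' ∧ D' ≤ D'' := by
  induction h generalizing D' with
  | bot => exact ⟨D', h', fun _ => bot_le, le_rfl⟩
  | val hV =>
    cases h' with
    | bot => exact ⟨_, .val hV, le_rfl, fun _ => bot_le⟩
    | val _ => exact ⟨_, .val hV, le_rfl, le_rfl⟩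
    | step _ hred _ => exact absurd hred (hval hV)
  | step Ds hred hDs ih =>
    cases h' with
    | bot => exact ⟨_, .step Ds hred hDs, le_rfl, fun _ => bot_le⟩
    | val hV => exact absurd hred (hval hV)
    | step Ds' hred' hDs' =>
      obtain rfl := hdet hred hred'
      choose Es hEs hDE hDE' using fun i => ih i (hDs' i)
      refine ⟨_, .step Es hred hEs, fun W => ?_, fun W => ?_⟩
      · exact ENNReal.div_le_div_right (Finset.sum_le_sum fun i _ => hDE i W) _
      · exact ENNReal.div_le_div_right (Finset.sum_le_sum fun i _ => hDE' i W) _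

theorem tsum_semOf_conv_mul_eq_iSup (M : Term) (g : Term → ℝ≥0∞) :
    ∑' X, semOf (Conv Red) M X * g X = ⨆ D : {D // Conv Red M D}, ∑' X, D.1 X * g X := by
  simp only [semOf_eq_iSup_subtype, ENNReal.iSup_mul]
  refine tsum_iSup_of_directed fun D D' => ?_
  obtain ⟨D'', h, hle, hle'⟩ := D.2.exists_ge_ge hval hdet D'.2
  exact ⟨⟨D'', h⟩, fun X => mul_le_mul_left (hle X) _, fun X => mul_le_mul_left (hle' X) _⟩

theorem isDist_semOf_conv (M : Term) : IsDist (semOf (Conv Red) M) := by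
  refine ⟨fun W hW => not_not.1 (mt (semOf_conv_eq_zero_of_not_isValue M) hW), ?_⟩
  have mass_eq := tsum_semOf_conv_mul_eq_iSup hval hdet M fun _ => 1
  simp only [mul_one] at mass_eq
  rw [dsum, mass_eq]
  exact iSup_le fun D => D.2.isDist.2

end Deterministic

end SmallStep

/-- Evaluation contexts of the reduction relation `Red`, presented as functions on terms: the hole
is where reduction takes place, as long as it is not filled with a value. -/
structure IsEvalContext (Red : Term → List Term → Prop) (C : Term → Term) : Prop where
  not_isValue {N : Term} : ¬ N.IsValue → ¬ (C N).IsValue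
  red_iff {N : Term} {Ns : List Term} :
    ¬ N.IsValue → (Red (C N) Ns ↔ ∃ Ls, Red N Ls ∧ Ns = Ls.map C)

namespace IsEvalContext

variable {Red : Term → List Term → Prop} {C : Term → Term} {N : Term} {D : PDist}

theorem le_tsum_of_conv (hC : IsEvalContext Red C) (h : Conv Red (C N) D) (W : Term) :
    D W ≤ ∑' X, semOf (Conv Red) N X * semOf (Conv Red) (C X) W := by
  generalize hM : C N = M at h
  induction h generalizing N with
  | bot => exact bot_le
  | val hV =>
    subst hM
    have hN : N.IsValue := not_not.1 (mt hC.not_isValue (not_not.2 hV))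
    exact (le_semOf (.val hV) W).trans (le_tsum_semOf_conv_mul_of_isValue hN _)
  | step Ds hred hDs ih =>
    subst hM
    by_cases hN : N.IsValue
    · exact (le_semOf (Conv.step Ds hred hDs) W).trans (le_tsum_semOf_conv_mul_of_isValue hN _)
    obtain ⟨Ls, hLs, rfl⟩ := (hC.red_iff hN).1 hred
    calc (∑ i, Ds i W) / ((Ls.map C).length : ℝ≥0∞)
        = (∑ i, Ds (Fin.cast (List.length_map C).symm i) W) / (Ls.length : ℝ≥0∞) :=
          sum_length_map_div Ls C fun i => Ds i W
      _ ≤ (∑ i, ∑' X, semOf (Conv Red) (Ls.get i) X * semOf (Conv Red) (C X) W) /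
            (Ls.length : ℝ≥0∞) := by
          gcongr with i
          exact ih (Fin.cast (List.length_map C).symm i) (by simp)
      _ ≤ ∑' X, semOf (Conv Red) N X * semOf (Conv Red) (C X) W :=
          sum_tsum_semOf_conv_mul_div_le hLs _

variable (hval : ∀ {V Ns}, Term.IsValue V → ¬ Red V Ns)

include hval

theorem tsum_le_of_conv (hC : IsEvalContext Red C) (h : Conv Red N D) (W : Term) :
    ∑' X, D X * semOf (Conv Red) (C X) W ≤ semOf (Conv Red) (C N) W := by
  induction h with
  | bot => simp [dzero]
  | @val V _ => exact (tsum_dirac_mul V fun X => semOf (Conv Red) (C X) W).le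
  | @step N Ls Ds hred _ ih =>
    have hCred : Red (C N) (Ls.map C) :=
      (hC.red_iff fun hN => hval hN hred).2 ⟨Ls, hred, rfl⟩
    calc ∑' X, (∑ i, Ds i X) / (Ls.length : ℝ≥0∞) * semOf (Conv Red) (C X) W
        = (∑ i, ∑' X, Ds i X * semOf (Conv Red) (C X) W) / (Ls.length : ℝ≥0∞) :=
          tsum_sum_div_mul Finset.univ _ Ds _
      _ ≤ (∑ i, semOf (Conv Red) (C (Ls.get i)) W) / (Ls.length : ℝ≥0∞) := by
          gcongr with i
          exact ih i
      _ = (∑ i, semOf (Conv Red) ((Ls.map C).get i) W) / ((Ls.map C).length : ℝ≥0∞) := by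
          rw [sum_length_map_div]
          simp
      _ ≤ semOf (Conv Red) (C N) W := sum_semOf_conv_div_le hCred W

variable (hdet : Relator.RightUnique Red)

include hdet

theorem semOf_conv (hC : IsEvalContext Red C) (N W : Term) :
    semOf (Conv Red) (C N) W = ∑' X, semOf (Conv Red) N X * semOf (Conv Red) (C X) W := by
  refine le_antisymm (iSup₂_le fun D hD => hC.le_tsum_of_conv hD W) ?_
  rw [tsum_semOf_conv_mul_eq_iSup hval hdet]
  exact iSup_le fun D => hC.tsum_le_of_conv hval D.2 W

end IsEvalContext

theorem semOf_conv_binary {Red : Term → List Term → Prop}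
    (hval : ∀ {V Ns}, Term.IsValue V → ¬ Red V Ns) (hdet : Relator.RightUnique Red)
    {op : Term → Term → Term}
    (hleft : ∀ L, IsEvalContext Red fun N => op N L)
    (hright : ∀ {V}, V.IsValue → IsEvalContext Red (op V)) (N L W : Term)
    {f : Term → Term → ℝ≥0∞}
    (hf : ∀ X Y, X.IsValue → Y.IsValue → semOf (Conv Red) (op X Y) W = f X Y) :
    semOf (Conv Red) (op N L) W =
      ∑' X, ∑' Y, semOf (Conv Red) N X * semOf (Conv Red) L Y * f X Y := by
  simp only [(hleft L).semOf_conv hval hdet N, mul_assoc, ENNReal.tsum_mul_left]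
  refine tsum_semOf_conv_mul_congr N fun X hX => ?_
  rw [(hright hX).semOf_conv hval hdet L]
  exact tsum_semOf_conv_mul_congr L fun Y hY => hf X Y hX hY

section CallByValue

variable {M V : Term} {Ns : List Term}

theorem not_redV_of_isValue (hV : V.IsValue) : ¬ RedV V Ns := by
  rintro (_ | _) <;> cases hV

theorem rightUnique_redV : Relator.RightUnique RedV := by
  intro M Ns Ns' h h'
  induction h generalizing Ns' with
  | beta hV =>
    cases h' with
    | beta => rfl
    | appL h => exact absurd h (not_redV_of_isValue (.lam _))
    | appR _ h => exact absurd h (not_redV_of_isValue hV)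
  | choice hV hW =>
    cases h' with
    | choice => rfl
    | choiceL h => exact absurd h (not_redV_of_isValue hV)
    | choiceR _ h => exact absurd h (not_redV_of_isValue hW)
  | appL h ih =>
    cases h' with
    | beta => exact absurd h (not_redV_of_isValue (.lam _))
    | appL h' => rw [ih h']
    | appR hV => exact absurd h (not_redV_of_isValue hV)
  | appR hV h ih =>
    cases h' with
    | beta hW => exact absurd h (not_redV_of_isValue hW)
    | appL h' => exact absurd h' (not_redV_of_isValue hV)
    | appR _ h' => rw [ih h']
  | choiceL h ih =>
    cases h' with
    | choice hV => exact absurd h (not_redV_of_isValue hV)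
    | choiceL h' => rw [ih h']
    | choiceR hV => exact absurd h (not_redV_of_isValue hV)
  | choiceR hV h ih =>
    cases h' with
    | choice _ hW => exact absurd h (not_redV_of_isValue hW)
    | choiceL h' => exact absurd h' (not_redV_of_isValue hV)
    | choiceR _ h' => rw [ih h']

theorem isEvalContext_app_left (L : Term) : IsEvalContext RedV fun N => .app N L where
  not_isValue _ := nofun
  red_iff hN := by
    refine ⟨fun h => ?_, ?_⟩
    · cases h with
      | beta => exact absurd (.lam _) hN
      | appL h => exact ⟨_, h, rfl⟩
      | appR hV => exact absurd hV hN
    · rintro ⟨Ls, h, rfl⟩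
      exact .appL h

theorem isEvalContext_app_right (hV : V.IsValue) : IsEvalContext RedV (.app V) where
  not_isValue _ := nofun
  red_iff hN := by
    refine ⟨fun h => ?_, ?_⟩
    · cases h with
      | beta hN' => exact absurd hN' hN
      | appL h => exact absurd h (not_redV_of_isValue hV)
      | appR _ h => exact ⟨_, h, rfl⟩
    · rintro ⟨Ls, h, rfl⟩
      exact .appR hV h

theorem isEvalContext_choice_left (L : Term) : IsEvalContext RedV fun N => .choice N L where
  not_isValue _ := nofun
  red_iff hN := by
    refine ⟨fun h => ?_, ?_⟩
    · cases h with
      | choice hV => exact absurd hV hN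
      | choiceL h => exact ⟨_, h, rfl⟩
      | choiceR hV => exact absurd hV hN
    · rintro ⟨Ls, h, rfl⟩
      exact .choiceL h

theorem isEvalContext_choice_right (hV : V.IsValue) : IsEvalContext RedV (.choice V) where
  not_isValue _ := nofun
  red_iff hN := by
    refine ⟨fun h => ?_, ?_⟩
    · cases h with
      | choice _ hN' => exact absurd hN' hN
      | choiceL h => exact absurd h (not_redV_of_isValue hV)
      | choiceR _ h => exact ⟨_, h, rfl⟩
    · rintro ⟨Ls, h, rfl⟩
      exact .choiceR hV h

theorem semV_of_isValue (hV : V.IsValue) : semV V = dirac V :=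
  semOf_conv_of_isValue not_redV_of_isValue hV

theorem isDist_semV (M : Term) : IsDist (semV M) :=
  isDist_semOf_conv not_redV_of_isValue rightUnique_redV M

theorem semV_of_redV (h : RedV M Ns) (W : Term) :
    semV M W = (∑ i, semV (Ns.get i) W) / (Ns.length : ℝ≥0∞) :=
  semOf_conv_of_red not_redV_of_isValue rightUnique_redV h W

theorem semV_beta (P : Term) (hV : V.IsValue) (W : Term) :
    semV (.app (.lam P) V) W = semV (P.subst 0 V) W := by
  simp [semV_of_redV (.beta hV)]

theorem semV_app_var (n : ℕ) (hV : V.IsValue) (W : Term) : semV (.app (.var n) V) W = 0 := by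
  refine semOf_conv_of_stuck (by nofun) (fun Ns h => ?_) W
  cases h with
  | appL h => exact not_redV_of_isValue (.var n) h
  | appR _ h => exact not_redV_of_isValue hV h

theorem semV_choice_of_isValue (hM : M.IsValue) (hV : V.IsValue) (W : Term) :
    semV (.choice M V) W = (dirac M W + dirac V W) / 2 := by
  simp [semV_of_redV (.choice hM hV), semV_of_isValue hM, semV_of_isValue hV]

theorem semV_app (N L W : Term) :
    semV (.app N L) W = ∑' P, ∑' V, semV N (.lam P) * semV L V * semV (P.subst 0 V) W := by
  let contract : Term → Term → ℝ≥0∞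
    | .lam P, V => semV (P.subst 0 V) W
    | _, _ => 0
  have contract_eq (X V : Term) (hX : X.IsValue) (hV : V.IsValue) :
      semV (.app X V) W = contract X V := by
    cases hX with
    | var n => exact semV_app_var n hV W
    | lam P => exact semV_beta P hV W
  have support_subset : (Function.support fun X => ∑' V, semV N X * semV L V * contract X V) ⊆
      Set.range Term.lam := by
    intro X hX
    cases X with
    | lam P => exact ⟨P, rfl⟩
    | var | app | choice => simp [contract] at hX
  calc semV (.app N L) W = ∑' X, ∑' V, semV N X * semV L V * contract X V :=
        semOf_conv_binary not_redV_of_isValue rightUnique_redV isEvalContext_app_left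
          isEvalContext_app_right N L W contract_eq
    _ = ∑' P, ∑' V, semV N (.lam P) * semV L V * semV (P.subst 0 V) W :=
        (Function.Injective.tsum_eq (fun _ _ => Term.lam.inj) support_subset).symm

theorem semV_choice (N L W : Term) :
    semV (.choice N L) W = (semV N W * dsum (semV L) + semV L W * dsum (semV N)) / 2 :=
  calc semV (.choice N L) W
      = ∑' X, ∑' Y, semV N X * semV L Y * ((dirac X W + dirac Y W) / 2) :=
        semOf_conv_binary not_redV_of_isValue rightUnique_redV isEvalContext_choice_left
          isEvalContext_choice_right N L W fun _ _ hX hY => semV_choice_of_isValue hX hY W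
    _ = (semV N W * dsum (semV L) + semV L W * dsum (semV N)) / 2 :=
        tsum_tsum_mul_half_dirac _ _ W

end CallByValue

theorem bigV_semV_general (M : Term) : BigV M (semV M) := by
  refine ⟨fun N E => E = semV N, ?_, rfl⟩
  rintro N _ rfl
  refine ⟨isDist_semV N, ?_⟩
  cases N with
  | var n => exact .inl ⟨.var n, semV_of_isValue (.var n)⟩
  | lam P => exact .inl ⟨.lam P, semV_of_isValue (.lam P)⟩
  | app N L =>
    exact .inr <| .inl ⟨N, L, semV N, semV L, fun P V => semV (P.subst 0 V), rfl, rfl, rfl,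
      fun _ _ _ _ _ => rfl, funext (semV_app N L)⟩
  | choice N L =>
    exact .inr <| .inr ⟨N, L, semV N, semV L, rfl, rfl, rfl, funext (semV_choice N L)⟩

/-- the call-by-value small-step semantics of `M` is itself
derivable in the coinductive call-by-value big-step semantics. -/
theorem bigV_semV (M : Term) (hM : M.Closed) :
    BigV M (semV M) := bigV_semV_general M
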